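/- arXiv:1206.3718 — 3 statements merged into one kernel-verified Lean document; each statement's English description precedes it below -/
import Mathlib

section
/- There exist constants c > 0 and n₀ ∈ ℕ such that for every n ≥ n₀ the following holds: if π₁, …, π_n are independent, uniformly random permutations of {1,…,n}, then with probability at least 1 − e^{−c·n²}, the routing instance I(π₁,…,π_n) admits no feasible schedule (load at most 1) with makespan at most 3.000032·n, even if packets may wait arbitrarily long at any node. -/
/-!
The proof is a union bound over the timings of a fast schedule.

*Few timings.* In a feasible schedule the packets cross the first edge `(s,s')` at distinct times,
and the last edge `(u_{n+1},t)` at distinct times below `T`. Summing (last time) − (first time) over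
all packets shows that, once the first edge is crossed, all packets together wait at most
`n * (T - 3n - 2) ≤ 0.000032 n²` steps (`exists_profile`). The times at which the critical edges are
crossed are determined by the `n` starting times and the `n²` delays between consecutive critical
edges; the generating function bound `card_delays_le` limits the number of delay vectors of total
at most `B = 0.000032 n²` to `1000^B (1000/999)^(n²)`, and the starting times contribute only
`T^n = exp(O(n log n))`.

*Each timing is unlikely.* Fix the times `τ i j` at which packet `i` crosses its `j`-th critical
edge. Two packets crossing at the same time must cross different critical edges. If the
permutations are drawn one packet after the other, the value of `πs i` at `j` has to avoid as many
values as there are earlier packets crossing some critical edge at time `τ i j`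
(`earlier τ i j`); these values are distinct by the constraints already imposed. The `n²` crossings
share at most `3.000032 n` time steps, so by Cauchy–Schwarz there are at least about `n³/6` such
conflicts (`sum_card_earlier`). The number of permutations avoiding forbidden sets is bounded by
choosing the values at the `m` most constrained positions first, ignoring injectivity there, and
ignoring the forbidden sets afterwards (`card_perm_avoiding_le`). With `m = n / 8` a given timing is
compatible with at most `(n!)^n exp(-n²/100)` tuples (`card_compatible_le`), which beats the number
of timings.
-/

/-- A routing instance: a finite directed multigraph together with packets
`0,…,k-1`, where packet `i` is given a list of edges `path i`. -/
structure RInst where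
  V : Type
  E : Type
  [fintE : Fintype E]
  src : E → V
  dst : E → V
  k : ℕ
  path : Fin k → List E

attribute [instance] RInst.fintE

namespace RInst

/-- The paths are directed paths (consecutive edges fit head-to-tail) and
use no edge more than once. -/
def Valid (I : RInst) : Prop :=
  (∀ i, List.Chain' (fun e f => I.dst e = I.src f) (I.path i)) ∧
  (∀ i, (I.path i).Nodup)

/-- `σ i t` is the number of edges of `path i` traversed by time `t`. -/
def IsSchedule (I : RInst) (σ : Fin I.k → ℕ → ℕ) : Prop :=
  (∀ i, σ i 0 = 0) ∧
  (∀ i t, σ i (t + 1) = σ i t ∨ σ i (t + 1) = σ i t + 1) ∧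
  (∀ i t, σ i t ≤ (I.path i).length)

/-- Packet `i` crosses edge `e` in time step `t+1`. -/
def Crosses (I : RInst) (σ : Fin I.k → ℕ → ℕ) (i : Fin I.k) (e : I.E) (t : ℕ) : Prop :=
  σ i (t + 1) = σ i t + 1 ∧ (I.path i)[σ i t]? = some e

/-- The load of the schedule is at most `c`: in every time step every edge
is crossed by at most `c` packets. -/
def LoadLE (I : RInst) (σ : Fin I.k → ℕ → ℕ) (c : ℕ) : Prop :=
  ∀ (e : I.E) (t : ℕ), Nat.card {i : Fin I.k | I.Crosses σ i e t} ≤ c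

/-- All packets have arrived by time `T` (i.e. the makespan is at most `T`). -/
def CompletedBy (I : RInst) (σ : Fin I.k → ℕ → ℕ) (T : ℕ) : Prop :=
  ∀ i, σ i T = (I.path i).length

/-- The congestion: the maximum number of paths using a common edge. -/
noncomputable def congestion (I : RInst) : ℕ :=
  Finset.univ.sup fun e : I.E => Nat.card {i : Fin I.k | e ∈ I.path i}

/-- The dilation: the maximum length of a path. -/
noncomputable def dilation (I : RInst) : ℕ :=
  Finset.univ.sup fun i : Fin I.k => (I.path i).length

end RInst

/-! ### The lower-bound instance `I(π₁,…,π_n)` on the graph `G_n` -/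

/-- Vertices of `G_n`: `s`, `s'`, `u_1,…,u_{n+1}`, `v_1,…,v_n`, `t`.
(`Fin (n+1)` indexes `u_1,…,u_{n+1}`, `Fin n` indexes `v_1,…,v_n`.) -/
def Vtx (n : ℕ) : Type := Unit ⊕ Unit ⊕ Fin (n + 1) ⊕ Fin n ⊕ Unit

def Vtx.s {n : ℕ} : Vtx n := Sum.inl ()
def Vtx.s' {n : ℕ} : Vtx n := Sum.inr (Sum.inl ())
def Vtx.u {n : ℕ} (j : Fin (n + 1)) : Vtx n := Sum.inr (Sum.inr (Sum.inl j))
def Vtx.v {n : ℕ} (j : Fin n) : Vtx n := Sum.inr (Sum.inr (Sum.inr (Sum.inl j)))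
def Vtx.t {n : ℕ} : Vtx n := Sum.inr (Sum.inr (Sum.inr (Sum.inr ())))

/-- Edges of `G_n`: `(s,s')`, the edges `(s',u_j)` for `1 ≤ j ≤ n`, the critical
edges `e_j = (u_j,v_j)` for `1 ≤ j ≤ n`, the back edges `(v_j,u_{j'})` for
`j' ≠ j`, and `(u_{n+1},t)`. -/
def Edg (n : ℕ) : Type :=
  Unit ⊕ Fin n ⊕ Fin n ⊕ { p : Fin n × Fin (n + 1) // (p.1 : ℕ) ≠ (p.2 : ℕ) } ⊕ Unit

instance (n : ℕ) : Fintype (Edg n) := by unfold Edg; infer_instance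
instance (n : ℕ) : DecidableEq (Edg n) := by unfold Edg; infer_instance

def Edg.start {n : ℕ} : Edg n := Sum.inl ()
def Edg.toU {n : ℕ} (j : Fin n) : Edg n := Sum.inr (Sum.inl j)
def Edg.crit {n : ℕ} (j : Fin n) : Edg n := Sum.inr (Sum.inr (Sum.inl j))
def Edg.back {n : ℕ} (j : Fin n) (j' : Fin (n + 1)) (h : (j : ℕ) ≠ (j' : ℕ)) : Edg n :=
  Sum.inr (Sum.inr (Sum.inr (Sum.inl ⟨(j, j'), h⟩)))
def Edg.toT {n : ℕ} : Edg n := Sum.inr (Sum.inr (Sum.inr (Sum.inr ())))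

def Edg.src {n : ℕ} : Edg n → Vtx n
  | Sum.inl _ => Vtx.s
  | Sum.inr (Sum.inl _) => Vtx.s'
  | Sum.inr (Sum.inr (Sum.inl j)) => Vtx.u j.castSucc
  | Sum.inr (Sum.inr (Sum.inr (Sum.inl p))) => Vtx.v p.1.1
  | Sum.inr (Sum.inr (Sum.inr (Sum.inr _))) => Vtx.u (Fin.last n)

def Edg.dst {n : ℕ} : Edg n → Vtx n
  | Sum.inl _ => Vtx.s'
  | Sum.inr (Sum.inl j) => Vtx.u j.castSucc
  | Sum.inr (Sum.inr (Sum.inl j)) => Vtx.v j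
  | Sum.inr (Sum.inr (Sum.inr (Sum.inl p))) => Vtx.u p.1.2
  | Sum.inr (Sum.inr (Sum.inr (Sum.inr _))) => Vtx.t

/-- The `u`-vertex visited after crossing the `(i+1)`-st critical edge on the
path of `π`: it is `u_{π(i+2)}` (0-based: `(π (i+1)).castSucc`), except after the
last critical edge, where it is `u_{n+1}` (0-based: `Fin.last n`). -/
def nxt {n : ℕ} (π : Equiv.Perm (Fin n)) (i : Fin n) : Fin (n + 1) :=
  if h : (i : ℕ) + 1 < n then (π ⟨(i : ℕ) + 1, h⟩).castSucc else Fin.last n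

theorem nxt_ne {n : ℕ} (π : Equiv.Perm (Fin n)) (i : Fin n) :
    ((π i : ℕ)) ≠ ((nxt π i : ℕ)) := by
  by_cases h : (i : ℕ) + 1 < n
  · simp only [nxt, dif_pos h, Fin.coe_castSucc]
    intro he
    have h2 : π i = π ⟨(i : ℕ) + 1, h⟩ := Fin.val_injective he
    have h4 : (i : ℕ) = (i : ℕ) + 1 := congrArg Fin.val (π.injective h2)
    omega
  · simp only [nxt, dif_neg h, Fin.val_last]
    exact Nat.ne_of_lt (π i).isLt

/-- The path `P(π) = s, s', u_{π(1)}, v_{π(1)}, u_{π(2)}, v_{π(2)}, …, u_{π(n)},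
v_{π(n)}, u_{n+1}, t` as a list of `2n+3` edges (for `n ≥ 1`). -/
def pathOf {n : ℕ} (π : Equiv.Perm (Fin n)) : List (Edg n) :=
  if h : 0 < n then
    Edg.start :: Edg.toU (π ⟨0, h⟩) ::
      ((List.ofFn fun i : Fin n =>
          [Edg.crit (π i), Edg.back (π i) (nxt π i) (nxt_ne π i)]).flatten ++ [Edg.toT])
  else []

/-- The routing instance `I(π₁,…,π_n)`: the `n` packets with paths
`P(π₁),…,P(π_n)` through `G_n`. -/
def lowerBoundInstance (n : ℕ) (πs : Fin n → Equiv.Perm (Fin n)) : RInst where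
  V := Vtx n
  E := Edg n
  src := Edg.src
  dst := Edg.dst
  k := n
  path i := pathOf (πs i)

/-! ### Counting permutations with forbidden values -/

open Classical in
/-- Sequential choice: if the `i`-th entry, subject to a unary constraint `U i` and to constraints `R`
with the earlier entries, always has at most `g i` admissible values once the earlier entries are
mutually compatible, then there are at most `∏ i, g i` admissible tuples. -/
theorem card_sequential_le {A : Type*} [Fintype A] :
    ∀ (N : ℕ) (U : Fin N → A → Prop) (R : Fin N → Fin N → A → A → Prop) (g : Fin N → ℕ),
      (∀ (i : Fin N) (p : Fin N → A), (∀ a b, a < b → b < i → R a b (p a) (p b)) →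
        (Finset.univ.filter fun x : A => U i x ∧ ∀ a, a < i → R a i (p a) x).card ≤ g i) →
      (Finset.univ.filter fun p : Fin N → A =>
        (∀ i, U i (p i)) ∧ ∀ a b, a < b → R a b (p a) (p b)).card ≤ ∏ i, g i := by
  intro N
  induction N with
  | zero =>
    intro U R g _
    refine (Finset.card_le_univ _).trans ?_
    simp
  | succ N ih =>
    intro U R g h
    have ih' := ih (fun i => U i.castSucc) (fun a b => R a.castSucc b.castSucc)
      (fun i => g i.castSucc) (by
        intro i p hp
        -- The value appended to `p` is irrelevant; `p i` serves as an element of `A`.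
        have := h i.castSucc (Fin.snoc (α := fun _ => A) p (p i)) (by
          intro a b hab hb
          have hb' : b ≠ Fin.last N := (hb.trans (Fin.castSucc_lt_last i)).ne
          have ha' : a ≠ Fin.last N := ((hab.trans hb).trans (Fin.castSucc_lt_last i)).ne
          obtain ⟨b, rfl⟩ := Fin.exists_castSucc_eq.2 hb'
          obtain ⟨a, rfl⟩ := Fin.exists_castSucc_eq.2 ha'
          simpa using hp a b (by simpa using hab) (by simpa using hb))
        refine le_trans (Finset.card_le_card ?_) this
        intro x hx
        simp only [Finset.mem_filter, Finset.mem_univ, true_and] at hx ⊢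
        refine ⟨hx.1, fun a ha => ?_⟩
        have ha' : a ≠ Fin.last N := (ha.trans (Fin.castSucc_lt_last i)).ne
        obtain ⟨a, rfl⟩ := Fin.exists_castSucc_eq.2 ha'
        simpa using hx.2 a (by simpa using ha))
    rw [Fin.prod_univ_castSucc, mul_comm]
    refine le_trans ?_ (Nat.mul_le_mul_left _ ih')
    refine Finset.card_le_mul_card_image_of_maps_to (f := fun p => fun i : Fin N => p i.castSucc)
      ?_ _ ?_
    · intro p hp
      simp only [Finset.mem_filter, Finset.mem_univ, true_and] at hp ⊢
      exact ⟨fun i => hp.1 _, fun a b hab => hp.2 _ _ (by simpa using hab)⟩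
    · intro q hq
      simp only [Finset.mem_filter, Finset.mem_univ, true_and] at hq
      by_cases hne : Nonempty A
      swap
      · rw [Finset.card_eq_zero.2]
        · exact Nat.zero_le _
        · rw [Finset.eq_empty_iff_forall_notMem]
          intro p _
          exact hne ⟨p 0⟩
      obtain ⟨x₀⟩ := hne
      have := h (Fin.last N) (Fin.snoc (α := fun _ => A) q x₀) (by
          intro a b hab hb
          obtain ⟨b, rfl⟩ := Fin.exists_castSucc_eq.2 hb.ne
          obtain ⟨a, rfl⟩ := Fin.exists_castSucc_eq.2 (hab.trans hb).ne
          simpa using hq.2 a b (by simpa using hab))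
      refine le_trans (Finset.card_le_card_of_injOn (fun p => p (Fin.last N)) ?_ ?_) this
      · intro p hp
        simp only [Finset.coe_filter, Finset.mem_filter, Finset.mem_univ, true_and,
          Set.mem_ofPred_eq] at hp ⊢
        refine ⟨hp.1.1 _, fun a ha => ?_⟩
        obtain ⟨a, rfl⟩ := Fin.exists_castSucc_eq.2 ha.ne
        have h2 : p a.castSucc = q a := congrFun hp.2 a
        simpa [h2] using hp.1.2 a.castSucc (Fin.last N) ha
      · intro p hp p' hp' hpp
        simp only [Finset.coe_filter, Finset.mem_filter, Finset.mem_univ, true_and,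
          Set.mem_ofPred_eq] at hp hp'
        funext i
        refine Fin.lastCases hpp (fun i => ?_) i
        exact (congrFun hp.2 i).trans (congrFun hp'.2 i).symm

/-- The positions can be reordered so that the first `m` of them carry at least the proportion `m / n`
of the total of `f`: sort `f` decreasingly and apply Chebyshev's sum inequality to `f` and the
indicator of the first `m` positions. -/
theorem exists_perm_prefix_sum (n m : ℕ) (hm : m ≤ n) (f : Fin n → ℕ) :
    ∃ e : Equiv.Perm (Fin n),
      m * ∑ j, f j ≤ n * ∑ k : Fin n, if (k : ℕ) < m then f (e k) else 0 := by
  let e : Equiv.Perm (Fin n) := Fin.revPerm.trans (Tuple.sort f)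
  refine ⟨e, ?_⟩
  have hanti : ∀ a b : Fin n, a ≤ b → f (e b) ≤ f (e a) := by
    intro a b hab
    exact Tuple.monotone_sort f (Fin.rev_le_rev.2 hab)
  have hmono : Monovary (fun k : Fin n => ((f (e k) : ℕ) : ℤ))
      (fun k : Fin n => if (k : ℕ) < m then (1 : ℤ) else 0) := by
    intro a b hab
    have h1 : (b : ℕ) < m := by by_contra h; simp [h] at hab; split_ifs at hab <;> omega
    have h2 : ¬ (a : ℕ) < m := by intro h; simp [h, h1] at hab
    refine Int.ofNat_le.2 (hanti b a ?_)
    rw [Fin.le_def]; omega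
  have h := hmono.sum_mul_sum_le_card_mul_sum
  have hc : ∑ k : Fin n, (if (k : ℕ) < m then (1 : ℤ) else 0) = m := by
    rw [Fin.sum_univ_eq_sum_range (fun k => if k < m then (1 : ℤ) else 0) n,
      ← Finset.sum_filter]
    have : (Finset.range n).filter (· < m) = Finset.range m := by ext; simp; omega
    simp [this]
  have hs : ∑ k, ((f (e k) : ℕ) : ℤ) = ∑ j, (f j : ℤ) := Equiv.sum_comp e (fun j => (f j : ℤ))
  rw [hc, hs] at h
  simp only [Fintype.card_fin, mul_ite, mul_one, mul_zero] at h
  rw [mul_comm] at h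
  exact_mod_cast h

open Classical in
/-- Upper bound for the number of permutations `π` with `π j ∉ F j` for all `j`. Positions are revealed
in decreasing order of `(F j).card`; each of the first `m` has at most `n - (F j).card` choices, and
the `k`-th position (counted from `0`) has at most `n - k` choices for `k ≥ m`. -/
theorem card_perm_avoiding_le (n m : ℕ) (hm : m < n) (F : Fin n → Finset (Fin n)) :
    ((Finset.univ.filter fun π : Equiv.Perm (Fin n) => ∀ j, π j ∉ F j).card : ℝ) ≤
      (n.factorial : ℝ) * Real.exp
        (-((m : ℝ) / (n : ℝ) ^ 2) * ∑ j, ((F j).card : ℝ) + (m : ℝ) ^ 2 / (2 * (n - m))) := by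
  have hn : (0 : ℝ) < n := by exact_mod_cast (by omega : 0 < n)
  have hnm : (0 : ℝ) < (n : ℝ) - m := by
    have : (m : ℝ) < n := by exact_mod_cast hm
    linarith
  obtain ⟨e, he⟩ := exists_perm_prefix_sum n m hm.le (fun j => (F j).card)
  have hseq := card_sequential_le (A := Fin n) n (fun k x => x ∉ F (e k)) (fun _ _ x y => x ≠ y)
    (fun k => if (k : ℕ) < m then n - (F (e k)).card else n - k) (by
      intro k p hp
      split_ifs with hk
      · have : (Finset.univ.filter fun x => x ∉ F (e k)).card = n - (F (e k)).card := by
          rw [← Finset.compl_filter, Finset.card_compl]; simp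
        rw [← this]
        apply Finset.card_le_card
        intro x hx
        simp only [Finset.mem_filter, Finset.mem_univ, true_and] at hx ⊢
        exact hx.1
      · have hinj : ((Finset.univ.filter (· < k)).image p).card = k := by
          rw [Finset.card_image_of_injOn]
          · have : (Finset.univ.filter (· < k)) = Finset.Iio k := by ext; simp
            rw [this, Fin.card_Iio]
          · intro a ha b hb hab
            simp only [Finset.coe_filter, Finset.mem_univ, true_and, Set.mem_ofPred_eq] at ha hb
            rcases lt_trichotomy a b with h | h | h
            · exact absurd hab (hp a b h hb)
            · exact h
            · exact absurd hab.symm (hp b a h ha)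
        have : ((Finset.univ.filter (· < k)).image p)ᶜ.card = n - k := by
          rw [Finset.card_compl, hinj]; simp
        rw [← this]
        apply Finset.card_le_card
        intro x hx
        simp only [Finset.mem_filter, Finset.mem_univ, true_and, Finset.mem_compl,
          Finset.mem_image, not_exists, not_and] at hx ⊢
        exact fun a ha => hx.2 a ha)
  have h1 : (Finset.univ.filter fun π : Equiv.Perm (Fin n) => ∀ j, π j ∉ F j).card ≤
      ∏ k : Fin n, (if (k : ℕ) < m then n - (F (e k)).card else n - k) := by
    refine le_trans (Finset.card_le_card_of_injOn (fun π => fun k => π (e k)) ?_ ?_) hseq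
    · intro π hπ
      simp only [Finset.coe_filter, Finset.mem_univ, true_and, Set.mem_ofPred_eq] at hπ ⊢
      exact ⟨fun k => hπ _, fun a b hab h => hab.ne (e.injective (π.injective h))⟩
    · intro π _ π' _ h
      ext j
      have := congrFun h (e.symm j)
      simp only [Equiv.apply_symm_apply] at this
      rw [this]
  have h2 : ((∏ k : Fin n, (if (k : ℕ) < m then n - (F (e k)).card else n - k) : ℕ) : ℝ) ≤
      ∏ k : Fin n, (((n - k : ℕ) : ℝ) * Real.exp (if (k : ℕ) < m then
        -((F (e k)).card : ℝ) / n + (k : ℝ) / (n - m) else 0)) := by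
    rw [Nat.cast_prod]
    refine Finset.prod_le_prod (fun _ _ => Nat.cast_nonneg _) (fun k _ => ?_)
    split_ifs with hk
    · have hF : (F (e k)).card ≤ n := (Finset.card_le_univ _).trans (by simp)
      rw [Nat.cast_sub hF, Nat.cast_sub k.2.le, Real.exp_add, neg_div]
      have hkm : ((k : ℕ) : ℝ) ≤ m := by exact_mod_cast hk.le
      have a1 : (n : ℝ) - (F (e k)).card ≤ n * Real.exp (-((F (e k)).card / n)) := by
        have := Real.add_one_le_exp (-((F (e k)).card / (n : ℝ)))
        have h3 := mul_le_mul_of_nonneg_left this hn.le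
        have : (n : ℝ) * (-((F (e k)).card / (n : ℝ)) + 1) = n - (F (e k)).card := by
          field_simp; ring
        linarith
      have a2 : (n : ℝ) ≤ (n - k) * Real.exp (k / (n - m)) := by
        have := Real.add_one_le_exp ((k : ℝ) / ((n : ℝ) - m))
        have hpos : (0 : ℝ) ≤ n - k := by linarith
        have h3 := mul_le_mul_of_nonneg_left this hpos
        have h4 : (k : ℝ) ≤ (n - k) * (k / (n - m)) := by
          rw [mul_div_assoc', le_div_iff₀ hnm]
          nlinarith [Nat.cast_nonneg (α := ℝ) (k : ℕ)]
        linarith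
      calc (n : ℝ) - (F (e k)).card ≤ n * Real.exp (-((F (e k)).card / n)) := a1
        _ ≤ ((n - k) * Real.exp (k / (n - m))) * Real.exp (-((F (e k)).card / n)) := by gcongr
        _ = _ := by ring
    · simp
  have h3 : ∏ k : Fin n, ((n - k : ℕ) : ℝ) = n.factorial := by
    rw [← Nat.cast_prod, Fin.prod_univ_eq_prod_range (fun k => n - k) n,
      ← Nat.descFactorial_eq_prod_range, Nat.descFactorial_self]
  rw [Finset.prod_mul_distrib, h3, ← Real.exp_sum] at h2
  refine le_trans (by exact_mod_cast h1) (h2.trans ?_)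
  refine mul_le_mul_of_nonneg_left (Real.exp_le_exp.2 ?_) (Nat.cast_nonneg _)
  have h4 : ∑ k : Fin n, (if (k : ℕ) < m then
        -((F (e k)).card : ℝ) / n + (k : ℝ) / (n - m) else 0) =
      -(∑ k : Fin n, (if (k : ℕ) < m then ((F (e k)).card : ℝ) else 0)) / n +
      (∑ k : Fin n, (if (k : ℕ) < m then ((k : ℕ) : ℝ) else 0)) / (n - m) := by
    rw [neg_div, Finset.sum_div, Finset.sum_div, ← Finset.sum_neg_distrib,
      ← Finset.sum_add_distrib]
    refine Finset.sum_congr rfl fun k _ => ?_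
    split_ifs <;> ring
  have h5 : (∑ k : Fin n, (if (k : ℕ) < m then ((k : ℕ) : ℝ) else 0)) ≤ (m : ℝ) ^ 2 / 2 := by
    rw [Fin.sum_univ_eq_sum_range (fun k => if k < m then (k : ℝ) else 0) n,
      ← Finset.sum_filter]
    have : (Finset.range n).filter (· < m) = Finset.range m := by ext; simp; omega
    rw [this]
    have := Finset.sum_range_id_mul_two m
    have h6 : (∑ i ∈ Finset.range m, (i : ℝ)) * 2 = ((m * (m - 1) : ℕ) : ℝ) := by
      rw [← this]; push_cast; rfl
    have h7 : ((m * (m - 1) : ℕ) : ℝ) ≤ (m : ℝ) ^ 2 := by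
      have : m * (m - 1) ≤ m ^ 2 := by rw [sq]; exact Nat.mul_le_mul_left _ (Nat.sub_le _ _)
      exact_mod_cast this
    linarith
  have h6 : (m : ℝ) * ∑ j, ((F j).card : ℝ) ≤
      n * ∑ k : Fin n, if (k : ℕ) < m then ((F (e k)).card : ℝ) else 0 := by
    exact_mod_cast he
  rw [h4]
  have h7 : (∑ k : Fin n, (if (k : ℕ) < m then ((k : ℕ) : ℝ) else 0)) / ((n : ℝ) - m) ≤
      (m : ℝ) ^ 2 / (2 * (n - m)) := by
    rw [← div_div]; gcongr
  have h8 : (m : ℝ) / (n : ℝ) ^ 2 * ∑ j, ((F j).card : ℝ) ≤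
      (∑ k : Fin n, if (k : ℕ) < m then ((F (e k)).card : ℝ) else 0) / n := by
    rw [div_mul_eq_mul_div, div_le_div_iff₀ (by positivity) hn]
    nlinarith
  rw [neg_div]
  linarith

/-! ### Tuples compatible with a fixed timing -/

/-- The permutations `πs` are compatible with the timing `τ`, where `τ i j` is the time at which packet
`i` crosses its `j`-th critical edge: no two distinct packets cross the same critical edge at the
same time. -/
def Compatible {n : ℕ} (τ : Fin n → Fin n → ℕ) (πs : Fin n → Equiv.Perm (Fin n)) : Prop :=
  ∀ a b, a < b → ∀ j j', τ b j = τ a j' → πs a j' ≠ πs b j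

/-- The pairs `(i', j')` such that packet `i' < i` crosses its `j'`-th critical edge at the same time as
packet `i` crosses its `j`-th one. -/
def earlier {n : ℕ} (τ : Fin n → Fin n → ℕ) (i j : Fin n) : Finset (Fin n × Fin n) :=
  Finset.univ.filter fun q => q.1 < i ∧ τ q.1 q.2 = τ i j

/-- Cauchy–Schwarz for the number of crossings per time step: the `n²` crossings fall into `T` time
steps, and the number of ordered pairs of simultaneous crossings is `n²` (the diagonal) plus twice
the number of conflicts counted by `earlier`. -/
theorem sum_card_earlier {n T : ℕ} (τ : Fin n → Fin n → ℕ) (hinj : ∀ i, Function.Injective (τ i))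
    (hT : ∀ i j, τ i j < T) :
    n ^ 4 ≤ T * (n ^ 2 + 2 * ∑ i, ∑ j, (earlier τ i j).card) := by
  let κ : Fin n × Fin n → ℕ := fun p => τ p.1 p.2
  have h1 : ∑ t ∈ Finset.range T, (Finset.univ.filter fun p => κ p = t).card = n ^ 2 := by
    rw [← Finset.card_eq_sum_card_fiberwise]
    · simp [sq]
    · intro p _
      simpa using hT p.1 p.2
  have h2 : ∑ t ∈ Finset.range T, (Finset.univ.filter fun p => κ p = t).card ^ 2 =
      ∑ p, ∑ q, if κ q = κ p then 1 else 0 := by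
    have : ∀ t, (Finset.univ.filter fun p => κ p = t).card ^ 2 =
        ∑ p, if κ p = t then (∑ q, if κ q = κ p then 1 else 0) else 0 := by
      intro t
      rw [← Finset.sum_filter, sq, Finset.card_eq_sum_ones, Finset.sum_mul]
      refine Finset.sum_congr rfl fun p hp => ?_
      rw [(Finset.mem_filter.1 hp).2]
      simp
    simp_rw [this]
    rw [Finset.sum_comm]
    refine Finset.sum_congr rfl fun p _ => ?_
    rw [Finset.sum_ite_eq, if_pos (Finset.mem_range.2 (hT p.1 p.2))]
  have h3 : ∑ p, ∑ q, (if κ q = κ p then 1 else 0) =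
      n ^ 2 + 2 * ∑ i, ∑ j, (earlier τ i j).card := by
    have hsplit : ∀ p q : Fin n × Fin n, (if κ q = κ p then 1 else 0) =
        (if q = p then 1 else 0) + (if q.1 < p.1 ∧ κ q = κ p then 1 else 0) +
          (if p.1 < q.1 ∧ κ p = κ q then 1 else 0) := by
      rintro ⟨a, b⟩ ⟨c, d⟩
      by_cases hk : κ (c, d) = κ (a, b)
      · rcases lt_trichotomy a c with h | h | h
        · simp [hk, h, h.not_gt, h.ne']
        · subst h
          have : d = b := hinj a hk
          subst this
          simp
        · simp [hk, h, h.not_gt, h.ne]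
      · have hne : (c, d) ≠ (a, b) := fun h => hk (by rw [h])
        simp [hk, hne, Ne.symm hk]
    simp_rw [hsplit, Finset.sum_add_distrib]
    have hc : ∑ p : Fin n × Fin n, ∑ q : Fin n × Fin n,
        (if p.1 < q.1 ∧ κ p = κ q then 1 else 0) =
        ∑ p : Fin n × Fin n, ∑ q : Fin n × Fin n,
        (if q.1 < p.1 ∧ κ q = κ p then 1 else 0) := Finset.sum_comm
    have hd : ∑ p : Fin n × Fin n, ∑ q : Fin n × Fin n,
        (if q.1 < p.1 ∧ κ q = κ p then 1 else 0) = ∑ i, ∑ j, (earlier τ i j).card := by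
      rw [Fintype.sum_prod_type]
      simp [earlier, κ]
    rw [hc, hd]
    simp [sq]
    ring
  have h4 := sq_sum_le_card_mul_sum_sq (s := Finset.range T)
    (f := fun t => (Finset.univ.filter fun p => κ p = t).card)
  rw [h1, h2, h3, Finset.card_range] at h4
  calc n ^ 4 = (n ^ 2) ^ 2 := by ring
    _ ≤ _ := h4

/-- The numerical estimate behind `card_compatible_le`, with `S` the total number of conflicts: the
main term is about `-(n / 8) * (n / 6)` and the correction is at most `(n / 8) * (n / 14)`. -/
theorem exponent_bound {n T : ℕ} {S : ℝ} (hn : 1000 ≤ n) (hTn : (T : ℝ) ≤ 3.000032 * n)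
    (hS0 : 0 ≤ S) (h2 : (n : ℝ) ^ 4 ≤ T * ((n : ℝ) ^ 2 + 2 * S)) :
    -(((n / 8 : ℕ) : ℝ) / (n : ℝ) ^ 2) * S +
        n * (((n / 8 : ℕ) : ℝ) ^ 2 / (2 * (n - ((n / 8 : ℕ) : ℝ)))) ≤ -(n : ℝ) ^ 2 / 100 := by
  obtain ⟨m, hm⟩ : ∃ m, m = n / 8 := ⟨_, rfl⟩
  rw [← hm]
  have hnR : (1000 : ℝ) ≤ n := by exact_mod_cast hn
  have hm1 : (m : ℝ) ≤ n / 8 := by rw [hm]; exact_mod_cast Nat.cast_div_le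
  have hm2 : (n : ℝ) / 8 - 1 ≤ m := by
    have : n ≤ 8 * m + 8 := by omega
    have : (n : ℝ) ≤ 8 * m + 8 := by exact_mod_cast this
    linarith
  have h3 : (n : ℝ) ^ 3 ≤ 3.000032 * ((n : ℝ) ^ 2 + 2 * S) := by
    have h4 : (n : ℝ) ^ 4 ≤ 3.000032 * n * ((n : ℝ) ^ 2 + 2 * S) :=
      h2.trans (mul_le_mul_of_nonneg_right hTn (by positivity))
    have : (n : ℝ) * n ^ 3 ≤ n * (3.000032 * ((n : ℝ) ^ 2 + 2 * S)) := by nlinarith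
    exact le_of_mul_le_mul_left this (by linarith)
  -- `0.166 < 1 / (2 * 3.000032)`
  have h4 : (0.166 * n - 0.5) * (n : ℝ) ^ 2 ≤ S := by nlinarith
  have h5 : (m : ℝ) * (0.166 * n - 0.5) ≤ m / (n : ℝ) ^ 2 * S := by
    have : (m : ℝ) * (0.166 * n - 0.5) = m / (n : ℝ) ^ 2 * ((0.166 * n - 0.5) * (n : ℝ) ^ 2) := by
      field_simp
    rw [this]
    gcongr
  have h6 : (n : ℝ) * ((m : ℝ) ^ 2 / (2 * (n - m))) ≤ m * (n / 14) := by
    rw [mul_div_assoc', div_le_iff₀ (by linarith)]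
    have : 0 ≤ (n : ℝ) * m * (n - 8 * m) := by
      apply mul_nonneg (by positivity); linarith
    nlinarith
  have h7 : (n : ℝ) ^ 2 / 100 ≤ m * (0.166 * n - 0.5) - m * (n / 14) := by
    have : (n / 8 - 1) * (0.166 * n - 0.5 - n / 14) ≤ (m : ℝ) * (0.166 * n - 0.5 - n / 14) := by
      apply mul_le_mul_of_nonneg_right hm2; linarith
    nlinarith
  rw [neg_mul, neg_div]
  linarith

open Classical in
/-- If `n ≥ 1000`, a fixed timing with values below `T ≤ 3.000032 n`, injective for each packet, is
compatible with at most an `exp (-n² / 100)` fraction of all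
tuples of permutations. -/
theorem card_compatible_le {n T : ℕ} (hn : 1000 ≤ n) (hTn : (T : ℝ) ≤ 3.000032 * n)
    (τ : Fin n → Fin n → ℕ) (hinj : ∀ i, Function.Injective (τ i)) (hT : ∀ i j, τ i j < T) :
    ((Finset.univ.filter fun πs : Fin n → Equiv.Perm (Fin n) => Compatible τ πs).card : ℝ) ≤
      (n.factorial : ℝ) ^ n * Real.exp (-(n : ℝ) ^ 2 / 100) := by
  obtain ⟨m, hm⟩ : ∃ m, m = n / 8 := ⟨_, rfl⟩
  have hmn : m < n := by omega
  let G : Fin n → ℝ := fun i => (n.factorial : ℝ) * Real.exp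
        (-((m : ℝ) / (n : ℝ) ^ 2) * ∑ j, ((earlier τ i j).card : ℝ) + (m : ℝ) ^ 2 / (2 * (n - m)))
  have hG : ∀ i, 0 ≤ G i := fun i => by positivity
  have hseq := card_sequential_le (A := Equiv.Perm (Fin n)) n (fun _ _ => True)
    (fun a b x y => ∀ j j', τ b j = τ a j' → x j' ≠ y j) (fun i => ⌊G i⌋₊) (by
      intro i p hp
      refine Nat.le_floor ?_
      let F : Fin n → Finset (Fin n) := fun j => (earlier τ i j).image fun q => p q.1 q.2
      have hF : ∀ j, (F j).card = (earlier τ i j).card := by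
        intro j
        refine Finset.card_image_of_injOn ?_
        rintro ⟨a, b⟩ hab ⟨c, d⟩ hcd h
        simp only [earlier, Finset.coe_filter, Finset.mem_univ, true_and,
          Set.mem_ofPred_eq] at hab hcd h
        have hτ : τ a b = τ c d := hab.2.trans hcd.2.symm
        rcases lt_trichotomy a c with hac | hac | hac
        · exact absurd h (hp a c hac hcd.1 d b hτ.symm)
        · subst hac
          rw [hinj a hτ]
        · exact absurd h.symm (hp c a hac hab.1 b d hτ)
      have hav := card_perm_avoiding_le n m hmn F
      simp_rw [hF] at hav
      refine le_trans ?_ hav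
      refine Nat.cast_le.2 (Finset.card_le_card ?_)
      intro x hx
      simp only [Finset.mem_filter, Finset.mem_univ, true_and, F, earlier, Finset.mem_image,
        not_exists, not_and, Prod.forall] at hx ⊢
      intro j a b hab
      exact hx a hab.1 j b hab.2.symm)
  simp only [implies_true, true_and] at hseq
  have h1 : ((Finset.univ.filter fun πs : Fin n → Equiv.Perm (Fin n) =>
      Compatible τ πs).card : ℝ) ≤ ∏ i, G i := by
    refine le_trans (b := ((∏ i, ⌊G i⌋₊ : ℕ) : ℝ)) ?_ ?_
    · refine Nat.cast_le.2 (le_trans (Finset.card_le_card ?_) hseq)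
      intro πs hπs
      simp only [Finset.mem_filter, Finset.mem_univ, true_and] at hπs ⊢
      exact hπs
    rw [Nat.cast_prod]
    exact Finset.prod_le_prod (fun _ _ => Nat.cast_nonneg _) fun i _ => Nat.floor_le (hG i)
  refine h1.trans ?_
  simp only [G]
  rw [Finset.prod_mul_distrib, Finset.prod_const, ← Real.exp_sum, Finset.card_univ,
    Fintype.card_fin]
  refine mul_le_mul_of_nonneg_left (Real.exp_le_exp.2 ?_) (by positivity)
  rw [Finset.sum_add_distrib, ← Finset.mul_sum, Finset.sum_const, Finset.card_univ,
    Fintype.card_fin, nsmul_eq_mul]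
  have h2 : (n : ℝ) ^ 4 ≤ T * ((n : ℝ) ^ 2 + 2 * ∑ i, ∑ j, ((earlier τ i j).card : ℝ)) := by
    exact_mod_cast sum_card_earlier τ hinj hT
  have hS0 : 0 ≤ ∑ i, ∑ j, ((earlier τ i j).card : ℝ) :=
    Finset.sum_nonneg fun i _ => Finset.sum_nonneg fun j _ => Nat.cast_nonneg _
  subst hm
  exact exponent_bound hn hTn hS0 h2

/-! ### The timing of a schedule -/

theorem sum_range_le_sum_of_injective {n : ℕ} (a : Fin n → ℕ) (ha : Function.Injective a) :
    ∑ k ∈ Finset.range n, k ≤ ∑ i, a i := by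
  have hcard : (Finset.univ.image fun i => (a i : ℤ)).card = n := by
    rw [Finset.card_image_of_injective _ fun x y hxy => ha (Nat.cast_injective hxy)]; simp
  have h := Finset.sum_range_le_sum (s := Finset.univ.image fun i => (a i : ℤ)) (c := 0)
    (by simp)
  rw [hcard, Finset.sum_image (fun x _ y _ hxy => ha (Nat.cast_injective hxy))] at h
  simp only [zero_add] at h
  have h' : ((∑ k ∈ Finset.range n, k : ℕ) : ℤ) ≤ ((∑ i, a i : ℕ) : ℤ) := by
    push_cast; exact h
  exact Int.ofNat_le.1 h'

theorem flatten_pairs_getElem? {α : Type*} :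
    ∀ (n : ℕ) (f g : Fin n → α) (l : List α) (j : Fin n),
      ((List.ofFn fun i => [f i, g i]).flatten ++ l)[2 * (j : ℕ)]? = some (f j) := by
  intro n
  induction n with
  | zero => intro f g l j; exact j.elim0
  | succ n ih =>
    intro f g l j
    rw [List.ofFn_succ]
    refine Fin.cases ?_ (fun j => ?_) j
    · simp
    · have := ih (fun i => f i.succ) (fun i => g i.succ) l j
      simpa [mul_add] using this

theorem flatten_pairs_length {α : Type*} (n : ℕ) (f g : Fin n → α) :
    ((List.ofFn fun i => [f i, g i]).flatten).length = 2 * n := by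
  simp [List.length_flatten, List.map_ofFn, Function.comp_def, mul_comm]

theorem pathOf_length {n : ℕ} (hn : 0 < n) (π : Equiv.Perm (Fin n)) :
    (pathOf π).length = 2 * n + 3 := by
  rw [pathOf, dif_pos hn]
  simp only [List.length_cons, List.length_append, flatten_pairs_length, List.length_nil]

theorem pathOf_first {n : ℕ} (hn : 0 < n) (π : Equiv.Perm (Fin n)) :
    (pathOf π)[0]? = some Edg.start := by
  rw [pathOf, dif_pos hn]; rfl

theorem pathOf_crit {n : ℕ} (π : Equiv.Perm (Fin n)) (j : Fin n) :
    (pathOf π)[2 * (j : ℕ) + 2]? = some (Edg.crit (π j)) := by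
  rw [pathOf, dif_pos (Fin.pos j), List.getElem?_cons_succ, List.getElem?_cons_succ,
    flatten_pairs_getElem?]

theorem pathOf_last {n : ℕ} (hn : 0 < n) (π : Equiv.Perm (Fin n)) :
    (pathOf π)[2 * n + 2]? = some Edg.toT := by
  rw [pathOf, dif_pos hn, List.getElem?_cons_succ, List.getElem?_cons_succ,
    List.getElem?_append_right (by rw [flatten_pairs_length]), flatten_pairs_length]
  simp

/-- A counter that starts at `0` and grows by at most `1` per step passes from `p` to `p + 1` at some
time, for each `p` below its value at time `T`. -/
theorem exists_crossing_time (s : ℕ → ℕ) (h0 : s 0 = 0)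
    (hs : ∀ t, s (t + 1) = s t ∨ s (t + 1) = s t + 1) :
    ∀ (T p : ℕ), p < s T → ∃ t, t < T ∧ s t = p ∧ s (t + 1) = p + 1 := by
  intro T
  induction T with
  | zero => intro p hp; omega
  | succ T ih =>
    intro p hp
    by_cases h : p < s T
    · obtain ⟨t, h1, h2⟩ := ih p h
      exact ⟨t, by omega, h2⟩
    · exact ⟨T, by omega, by have := hs T; omega, by have := hs T; omega⟩

/-- The crossing times of the critical edges recovered from the times `a i` at which the packets cross
the first edge and the delays `d (i, j)` in excess of the two steps needed from one critical edge
(or from the first edge) to the next. Summation is over a range of naturals; the `else` branch is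
never reached for `j : Fin n`. -/
def decode {n : ℕ} (a : Fin n → ℕ) (d : Fin n × Fin n → ℕ) (i j : Fin n) : ℕ :=
  a i + ∑ k ∈ Finset.range ((j : ℕ) + 1), ((if h : k < n then d (i, ⟨k, h⟩) else 0) + 2)

theorem decode_injective {n : ℕ} (a : Fin n → ℕ) (d : Fin n × Fin n → ℕ) (i : Fin n) :
    Function.Injective (decode a d i) := by
  have hmono : StrictMono fun j : ℕ =>
      a i + ∑ k ∈ Finset.range (j + 1), ((if h : k < n then d (i, ⟨k, h⟩) else 0) + 2) := by
    refine strictMono_nat_of_lt_succ fun j => ?_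
    simp only [Finset.sum_range_succ _ (j + 1)]
    omega
  intro j j' h
  exact Fin.val_injective (hmono.injective h)

/-- A feasible schedule of makespan at most `T` yields starting times and delays whose decoded timing is
compatible with the permutations, and whose total delay is at most `n * (T - 3 * n - 2)`. -/
theorem exists_profile {n : ℕ} (hn : 0 < n) (πs : Fin n → Equiv.Perm (Fin n)) (T : ℕ)
    (σ : Fin n → ℕ → ℕ) (hσ : (lowerBoundInstance n πs).IsSchedule σ)
    (hload : (lowerBoundInstance n πs).LoadLE σ 1)
    (hcomp : (lowerBoundInstance n πs).CompletedBy σ T) :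
    ∃ (a : Fin n → ℕ) (d : Fin n × Fin n → ℕ), (∀ i, a i < T) ∧
      (∑ p, d p) + n * (3 * n + 2) ≤ n * T ∧ (∀ i j, decode a d i j < T) ∧
      Compatible (decode a d) πs := by
  obtain ⟨h0, hstep, -⟩ := hσ
  have hlen : ∀ i : Fin n, σ i T = 2 * n + 3 := fun i =>
    (hcomp i).trans (pathOf_length hn (πs i))
  have hmono : ∀ i : Fin n, Monotone (σ i) := fun i =>
    monotone_nat_of_le_succ fun t => by have := hstep i t; omega
  have hex : ∀ (i : Fin n) (p : ℕ), ∃ t, p < 2 * n + 3 →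
      t < T ∧ σ i t = p ∧ σ i (t + 1) = p + 1 := by
    intro i p
    by_cases hp : p < 2 * n + 3
    · obtain ⟨t, ht⟩ := exists_crossing_time (σ i) (h0 i) (hstep i) T p (by rw [hlen]; exact hp)
      exact ⟨t, fun _ => ht⟩
    · exact ⟨0, fun h => absurd h hp⟩
  -- `θ i p` is the time at which packet `i` crosses the edge of index `p` of its path.
  choose θ hθ using hex
  have hθlt : ∀ i p, p + 1 < 2 * n + 3 → θ i p + 1 ≤ θ i (p + 1) := by
    intro i p hp
    by_contra hlt
    have h1 := hθ i p (by omega)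
    have h2 := hθ i (p + 1) hp
    have h3 := hmono i (show θ i (p + 1) + 1 ≤ θ i p + 1 by omega)
    omega
  have huniq : ∀ (e : Edg n) (t : ℕ) (i i' : Fin n) (p p' : ℕ), p < 2 * n + 3 → p' < 2 * n + 3 →
      (pathOf (πs i))[p]? = some e → (pathOf (πs i'))[p']? = some e →
      θ i p = t → θ i' p' = t → i = i' := by
    intro e t i i' p p' hp hp' he he' ht ht'
    have hsub := Finite.card_le_one_iff_subsingleton.1 (hload e t)
    have c1 : (lowerBoundInstance n πs).Crosses σ i e t := by
      have h := hθ i p hp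
      rw [ht] at h
      exact ⟨by omega, by rw [h.2.1]; exact he⟩
    have c2 : (lowerBoundInstance n πs).Crosses σ i' e t := by
      have h := hθ i' p' hp'
      rw [ht'] at h
      exact ⟨by omega, by rw [h.2.1]; exact he'⟩
    exact congrArg Subtype.val (hsub.elim ⟨i, c1⟩ ⟨i', c2⟩)
  let d : Fin n × Fin n → ℕ := fun p => θ p.1 (2 * (p.2 : ℕ) + 2) - θ p.1 (2 * (p.2 : ℕ)) - 2
  have htel : ∀ (i : Fin n) (j : ℕ), j ≤ n → θ i 0 +
      ∑ k ∈ Finset.range j, ((if h : k < n then d (i, ⟨k, h⟩) else 0) + 2) = θ i (2 * j) := by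
    intro i j
    induction j with
    | zero => intro _; simp
    | succ j ih =>
      intro hj
      have h1 := hθlt i (2 * j) (by omega)
      have h2 : θ i (2 * j + 1) + 1 ≤ θ i (2 * j + 2) := hθlt i (2 * j + 1) (by omega)
      rw [Finset.sum_range_succ, ← add_assoc, ih (by omega), dif_pos (by omega)]
      simp only [d]
      rw [mul_add, mul_one]
      omega
  have hdec : ∀ i j : Fin n, decode (fun i => θ i 0) d i j = θ i (2 * (j : ℕ) + 2) := by
    intro i j
    rw [decode, htel i _ j.2]
    rfl
  refine ⟨fun i => θ i 0, d, fun i => (hθ i 0 (by omega)).1, ?_, ?_, ?_⟩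
  · have ha : Function.Injective fun i => θ i 0 := fun i i' h =>
      huniq Edg.start _ i i' 0 0 (by omega) (by omega) (pathOf_first hn _) (pathOf_first hn _)
        h rfl
    have hbT : ∀ i, θ i (2 * n + 2) < T := fun i => (hθ i (2 * n + 2) (by omega)).1
    -- Reflected arrival times, so that the same lower bound for sums of distinct naturals applies.
    have hb : Function.Injective fun i => T - 1 - θ i (2 * n + 2) := fun i i' h =>
      huniq Edg.toT _ i i' (2 * n + 2) (2 * n + 2) (by omega) (by omega) (pathOf_last hn _)
        (pathOf_last hn _) (by have := hbT i; have := hbT i'; simp only at h; omega) rfl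
    have hsa := sum_range_le_sum_of_injective _ ha
    have hsb := sum_range_le_sum_of_injective _ hb
    have hi : ∀ i, θ i 0 + (∑ j, d (i, j)) + (T - 1 - θ i (2 * n + 2)) + (2 * n + 3) ≤ T := by
      intro i
      have h1 := htel i n le_rfl
      have h2 := hθlt i (2 * n) (by omega)
      have h3 := hθlt i (2 * n + 1) (by omega)
      have h4 := hbT i
      rw [Finset.sum_add_distrib,
        ← Fin.sum_univ_eq_sum_range (fun k => if h : k < n then d (i, ⟨k, h⟩) else 0)] at h1
      simp only [Fin.is_lt, dite_true, Fin.eta, Finset.sum_const, Finset.card_range,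
        smul_eq_mul] at h1
      have h5 : 2 * n + 1 + 1 = 2 * n + 2 := rfl
      rw [h5] at h3
      omega
    have hsum := Finset.sum_le_sum fun i (_ : i ∈ Finset.univ) => hi i
    simp only [Finset.sum_add_distrib, Finset.sum_const, Finset.card_univ, Fintype.card_fin,
      smul_eq_mul] at hsum
    rw [Fintype.sum_prod_type]
    have hg := Finset.sum_range_id_mul_two n
    obtain ⟨k, rfl⟩ : ∃ k, n = k + 1 := ⟨n - 1, by omega⟩
    simp only [Nat.add_sub_cancel] at hg
    nlinarith
  · intro i j
    rw [hdec]
    exact (hθ i _ (by omega)).1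
  · intro a b hab j j' hτ heq
    rw [hdec, hdec] at hτ
    refine hab.ne (huniq (Edg.crit (πs a j')) _ a b (2 * (j' : ℕ) + 2) (2 * (j : ℕ) + 2)
      (by omega) (by omega) (pathOf_crit _ _) ?_ hτ.symm rfl)
    rw [heq]
    exact pathOf_crit _ _

/-! ### Counting delays and the union bound -/

/-- The number of delay vectors of total at most `B`, bounded by evaluating the generating function
`(1 - x)⁻ᴺ` at `x = 1 / 1000`. -/
theorem card_delays_le (N B : ℕ) (ι : Type*) [Fintype ι] [DecidableEq ι]
    (hN : Fintype.card ι = N) :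
    (((Fintype.piFinset fun _ : ι => Finset.range (B + 1)).filter
      fun d => ∑ p, d p ≤ B).card : ℝ) ≤ 1000 ^ B * (1000 / 999) ^ N := by
  set D := (Fintype.piFinset fun _ : ι => Finset.range (B + 1)).filter fun d => ∑ p, d p ≤ B
  have h1 : (D.card : ℝ) * (1 / 1000) ^ B ≤ ∑ d ∈ D, ∏ p, (1 / 1000 : ℝ) ^ d p := by
    rw [← nsmul_eq_mul]
    refine Finset.card_nsmul_le_sum _ _ _ fun d hd => ?_
    rw [Finset.prod_pow_eq_pow_sum]
    exact pow_le_pow_of_le_one (by norm_num) (by norm_num) (Finset.mem_filter.1 hd).2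
  have h2 : ∑ d ∈ D, ∏ p, (1 / 1000 : ℝ) ^ d p ≤ (1000 / 999) ^ N := by
    calc ∑ d ∈ D, ∏ p, (1 / 1000 : ℝ) ^ d p
        ≤ ∑ d ∈ Fintype.piFinset fun _ : ι => Finset.range (B + 1), ∏ p, (1 / 1000 : ℝ) ^ d p :=
          Finset.sum_le_sum_of_subset_of_nonneg (Finset.filter_subset _ _)
            fun _ _ _ => by positivity
      _ = ∏ _p : ι, ∑ k ∈ Finset.range (B + 1), (1 / 1000 : ℝ) ^ k :=
          (Finset.prod_univ_sum (fun _ => Finset.range (B + 1)) fun _ k => (1 / 1000 : ℝ) ^ k).symm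
      _ ≤ ∏ _p : ι, (1000 / 999 : ℝ) := by
          refine Finset.prod_le_prod (fun _ _ => by positivity) fun _ _ => ?_
          have h := geom_sum_eq (x := (1 / 1000 : ℝ)) (by norm_num) (B + 1)
          rw [h]
          have : (0 : ℝ) ≤ (1 / 1000) ^ (B + 1) := by positivity
          rw [div_le_iff_of_neg (by norm_num)]
          linarith
      _ = (1000 / 999) ^ N := by rw [Finset.prod_const, Finset.card_univ, hN]
  have h3 := mul_le_mul_of_nonneg_right (h1.trans h2) (by positivity : (0 : ℝ) ≤ 1000 ^ B)
  rw [mul_assoc, ← mul_pow] at h3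
  norm_num at h3
  norm_num
  linarith

/-- There are constants `c > 0` and `n₀` such that for all
`n ≥ n₀`: if `π₁,…,π_n` are independent uniformly random permutations of
`{1,…,n}` (i.e. a uniform element of the product of permutation groups), then
with probability at least `1 − e^{−c·n²}` the instance `I(π₁,…,π_n)` admits no
feasible schedule (load at most `1`) with makespan at most `3.000032·n` — even
though packets may wait arbitrarily long at any node. Equivalently, the number
of tuples `(π₁,…,π_n)` admitting such a schedule is at most an `e^{−c·n²}`
fraction of all tuples. -/
theorem random_instance_has_no_fast_schedule :
    ∃ c : ℝ, 0 < c ∧ ∃ n₀ : ℕ, ∀ n : ℕ, n₀ ≤ n →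
      (Nat.card {πs : Fin n → Equiv.Perm (Fin n) //
          ∃ σ : Fin (lowerBoundInstance n πs).k → ℕ → ℕ,
            (lowerBoundInstance n πs).IsSchedule σ ∧
            (lowerBoundInstance n πs).LoadLE σ 1 ∧
            ∃ T : ℕ, (T : ℝ) ≤ 3.000032 * n ∧
              (lowerBoundInstance n πs).CompletedBy σ T} : ℝ)
        ≤ Real.exp (-c * (n : ℝ) ^ 2) *
            (Nat.card (Fin n → Equiv.Perm (Fin n)) : ℝ) := by
  classical
  have hlim : ∀ᶠ n : ℕ in Filter.atTop, 4 * (n : ℝ) ≤ Real.exp (n / 1000) := by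
    have h := (Real.tendsto_exp_div_pow_atTop 1).comp
      (tendsto_natCast_atTop_atTop.atTop_div_const (by norm_num : (0 : ℝ) < 1000))
    filter_upwards [h.eventually_ge_atTop 4000, Filter.eventually_gt_atTop 0] with n h1 h2
    have hn : (0 : ℝ) < n := by exact_mod_cast h2
    simp only [Function.comp, pow_one] at h1
    rw [le_div_iff₀ (by positivity)] at h1
    linarith
  obtain ⟨n₁, hn₁⟩ := Filter.eventually_atTop.1 hlim
  refine ⟨1 / 1000, by norm_num, max 1000 n₁, fun n hn => ?_⟩
  have hn1 : 1000 ≤ n := (le_max_left _ _).trans hn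
  have hexp := hn₁ n ((le_max_right _ _).trans hn)
  have hnR : (1000 : ℝ) ≤ n := by exact_mod_cast hn1
  obtain ⟨T, hTdef⟩ : ∃ T, T = ⌊(3.000032 : ℝ) * n⌋₊ := ⟨_, rfl⟩
  have hT : (T : ℝ) ≤ 3.000032 * n := by
    rw [hTdef]; exact Nat.floor_le (by positivity)
  obtain ⟨B, hBdef⟩ : ∃ B, B = ⌊(0.000032 : ℝ) * (n : ℝ) ^ 2⌋₊ := ⟨_, rfl⟩
  have hB : (B : ℝ) ≤ 0.000032 * (n : ℝ) ^ 2 := by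
    rw [hBdef]; exact Nat.floor_le (by positivity)
  let D := (Fintype.piFinset fun _ : Fin n × Fin n => Finset.range (B + 1)).filter
    fun d => ∑ p, d p ≤ B
  let Pr := ((Fintype.piFinset fun _ : Fin n => Finset.range T) ×ˢ D).filter
    fun q => ∀ i j, decode q.1 q.2 i j < T
  let C : (Fin n → ℕ) × (Fin n × Fin n → ℕ) → Finset (Fin n → Equiv.Perm (Fin n)) :=
    fun q => Finset.univ.filter fun πs => Compatible (decode q.1 q.2) πs
  rw [Nat.card_eq_fintype_card, Fintype.card_subtype]
  have hsub : (Finset.univ.filter fun πs : Fin n → Equiv.Perm (Fin n) =>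
      ∃ σ : Fin (lowerBoundInstance n πs).k → ℕ → ℕ,
            (lowerBoundInstance n πs).IsSchedule σ ∧
            (lowerBoundInstance n πs).LoadLE σ 1 ∧
            ∃ T : ℕ, (T : ℝ) ≤ 3.000032 * n ∧
              (lowerBoundInstance n πs).CompletedBy σ T) ⊆ Pr.biUnion C := by
    intro πs hπs
    obtain ⟨σ, hσ, hload, T', hT', hcomp⟩ := (Finset.mem_filter.1 hπs).2
    have hTT : T' ≤ T := by rw [hTdef]; exact Nat.le_floor hT'
    have hcomp' : (lowerBoundInstance n πs).CompletedBy σ T := by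
      intro i
      refine le_antisymm (hσ.2.2 i T) ?_
      rw [← hcomp i]
      exact monotone_nat_of_le_succ (fun t => by have := hσ.2.1 i t; omega) hTT
    obtain ⟨a, d, ha, hd, hdT, hc⟩ := exists_profile (by omega) πs T σ hσ hload hcomp'
    have hdB : ∑ p, d p ≤ B := by
      rw [hBdef]
      refine Nat.le_floor ?_
      have hd' : ((∑ p, d p : ℕ) : ℝ) + n * (3 * n + 2) ≤ n * T := by exact_mod_cast hd
      nlinarith
    refine Finset.mem_biUnion.2 ⟨(a, d), ?_, Finset.mem_filter.2 ⟨Finset.mem_univ _, hc⟩⟩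
    refine Finset.mem_filter.2 ⟨Finset.mem_product.2 ⟨?_, Finset.mem_filter.2 ⟨?_, hdB⟩⟩, hdT⟩
    · exact Fintype.mem_piFinset.2 fun i => Finset.mem_range.2 (ha i)
    · refine Fintype.mem_piFinset.2 fun p => Finset.mem_range.2 (Nat.lt_succ_of_le ?_)
      exact (Finset.single_le_sum (fun _ _ => Nat.zero_le _) (Finset.mem_univ p)).trans hdB
  have hcardC : ∀ q ∈ Pr, ((C q).card : ℝ) ≤
      (n.factorial : ℝ) ^ n * Real.exp (-(n : ℝ) ^ 2 / 100) := fun q hq =>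
    card_compatible_le hn1 hT _ (decode_injective q.1 q.2) (Finset.mem_filter.1 hq).2
  have hD : (D.card : ℝ) ≤ 1000 ^ B * (1000 / 999) ^ (n ^ 2) :=
    card_delays_le (n ^ 2) B (Fin n × Fin n) (by simp [sq])
  have hPr : (Pr.card : ℝ) ≤ (T : ℝ) ^ n * D.card := by
    have : Pr.card ≤ T ^ n * D.card := by
      refine (Finset.card_filter_le _ _).trans ?_
      rw [Finset.card_product, Fintype.card_piFinset]
      simp
    exact_mod_cast this
  have htotal : (Nat.card (Fin n → Equiv.Perm (Fin n)) : ℝ) = (n.factorial : ℝ) ^ n := by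
    rw [Nat.card_eq_fintype_card]
    simp [Fintype.card_perm]
  rw [htotal]
  have hTn : (T : ℝ) ^ n ≤ Real.exp ((n : ℝ) ^ 2 / 1000) := by
    calc (T : ℝ) ^ n ≤ Real.exp (n / 1000) ^ n := by
          gcongr
          linarith
      _ = _ := by rw [← Real.exp_nat_mul]; congr 1; ring
  have h1000 : (1000 : ℝ) ^ B ≤ Real.exp (0.000224 * (n : ℝ) ^ 2) := by
    have h7 : (1000 : ℝ) ≤ Real.exp 7 := by
      have h := Real.exp_one_gt_d9
      have : Real.exp 7 = Real.exp 1 ^ 7 := by rw [← Real.exp_nat_mul]; norm_num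
      rw [this]
      calc (1000 : ℝ) ≤ 2.7182818283 ^ 7 := by norm_num
        _ ≤ _ := by gcongr
    calc (1000 : ℝ) ^ B ≤ Real.exp 7 ^ B := by gcongr
      _ = Real.exp (B * 7) := by rw [← Real.exp_nat_mul]
      _ ≤ _ := by apply Real.exp_le_exp.2; linarith
  have h999 : (1000 / 999 : ℝ) ^ (n ^ 2) ≤ Real.exp ((n : ℝ) ^ 2 / 999) := by
    calc (1000 / 999 : ℝ) ^ (n ^ 2) ≤ Real.exp (1 / 999) ^ (n ^ 2) := by
          gcongr
          have := Real.add_one_le_exp (1 / 999 : ℝ)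
          linarith
      _ = _ := by rw [← Real.exp_nat_mul]; congr 1; push_cast; ring
  -- `1/1000 + 0.000224 + 1/999 - 1/100 ≤ -1/1000`
  calc _ ≤ ((Pr.biUnion C).card : ℝ) := by exact_mod_cast Finset.card_le_card hsub
    _ ≤ ∑ q ∈ Pr, ((C q).card : ℝ) := by exact_mod_cast Finset.card_biUnion_le
    _ ≤ Pr.card • ((n.factorial : ℝ) ^ n * Real.exp (-(n : ℝ) ^ 2 / 100)) :=
        Finset.sum_le_card_nsmul _ _ _ hcardC
    _ = Pr.card * ((n.factorial : ℝ) ^ n * Real.exp (-(n : ℝ) ^ 2 / 100)) := nsmul_eq_mul _ _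
    _ ≤ (Real.exp ((n : ℝ) ^ 2 / 1000) *
          (Real.exp (0.000224 * (n : ℝ) ^ 2) * Real.exp ((n : ℝ) ^ 2 / 999))) *
          ((n.factorial : ℝ) ^ n * Real.exp (-(n : ℝ) ^ 2 / 100)) := by
        gcongr
        refine hPr.trans ?_
        gcongr
        refine hD.trans ?_
        gcongr
    _ = Real.exp ((n : ℝ) ^ 2 / 1000 + (0.000224 * (n : ℝ) ^ 2 + (n : ℝ) ^ 2 / 999) +
          -(n : ℝ) ^ 2 / 100) * (n.factorial : ℝ) ^ n := by
        rw [Real.exp_add, Real.exp_add, Real.exp_add]; ring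
    _ ≤ _ := by
        gcongr
        nlinarith
end

section
/- For every ε > 0 and every δ > 0 there exists n₀ ∈ ℕ such that for all n ≥ n₀, the number of candidate routing matrices for parameters ε and n is at most 2^{(Φ(ε)+δ)·n²}. -/
/-!
Summing the arrival-time constraints over all packets shows that the total time spent waiting at
the nodes `u_j` is at most `ε n²`: the `n` distinct arrival times below `(3+ε)n` sum to at most
`(3+ε)n² - n(n-1)/2`, and the `n` distinct parking times sum to at least `n(n-1)/2`
(`total_wait_le`). The candidate matrices are then counted with a generating function. For
`0 < x < 1`, give a matrix the weight `x ^ (total waiting time)`. Each candidate has weight at least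
`x ^ (ε n²)`, while the total weight of all matrices with entries in `range K`, where
`K = ⌊(3+ε)n⌋ + 1`, factors and is at most `K ^ n * (1 - x)⁻¹ ^ (n(n+1))` (`sum_weight_le`).
At `x = ε/(1+ε)` one has `x ^ (-ε) * (1 - x)⁻¹ = 2 ^ Φ(ε)` exactly (`two_rpow_Phi`), so the count
is at most `2 ^ (Φ(ε) n²) * (K * (1 + ε)) ^ n`, and the last factor is `2 ^ o(n²)`.
-/

/-- The binary entropy function `H(δ) = δ·log₂(1/δ) + (1−δ)·log₂(1/(1−δ))`. -/
noncomputable def binEntropy (x : ℝ) : ℝ :=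
  x * Real.logb 2 (1 / x) + (1 - x) * Real.logb 2 (1 / (1 - x))

/-- `Φ(x) = (1+x)·H(x/(1+x))`. -/
noncomputable def Phi (x : ℝ) : ℝ := (1 + x) * binEntropy (x / (1 + x))

/-- The arrival time `F_i = W_{i,0} + (2n+3) + Σ_{j=1}^{n+1} W_{i,j}` of packet `i`
under the routing matrix `W` (columns indexed by `Fin (n+2)`, column `0` being the
parking time at the source). -/
def arrivalTime {n : ℕ} (W : Fin n → Fin (n + 2) → ℕ) (i : Fin n) : ℕ :=
  W i 0 + (2 * n + 3) + ∑ j ∈ Finset.univ.filter (fun j : Fin (n + 2) => j ≠ 0), W i j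

/-- A candidate routing matrix for parameters `ε` and `n`: the parking times
`W_{i,0}` are pairwise distinct, the arrival times `F_i` are pairwise distinct,
and `F_i ≤ (3+ε)·n` for every `i`. -/
def IsCandidate (ε : ℝ) (n : ℕ) (W : Fin n → Fin (n + 2) → ℕ) : Prop :=
  Function.Injective (fun i => W i 0) ∧
  Function.Injective (arrivalTime W) ∧
  ∀ i, (arrivalTime W i : ℝ) ≤ (3 + ε) * n

lemma sum_range_card_le (s : Finset ℕ) : ∑ k ∈ Finset.range s.card, k ≤ ∑ k ∈ s, k := by
  induction s using Finset.induction_on_max with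
  | empty => simp
  | insert a s hs ih =>
    have ha : a ∉ s := fun h => lt_irrefl _ (hs a h)
    have hc : s.card ≤ a := by
      simpa using Finset.card_le_card (t := Finset.range a) fun k hk => by simpa using hs k hk
    rw [Finset.card_insert_of_notMem ha, Finset.sum_range_succ, Finset.sum_insert ha]
    omega

lemma sum_range_le_of_injective {n : ℕ} (f : Fin n → ℕ) (hf : Function.Injective f) :
    ∑ k ∈ Finset.range n, k ≤ ∑ i, f i := by
  simpa using sum_range_card_le (Finset.univ.map ⟨f, hf⟩)

/-- The total waiting time at the intermediate nodes, i.e. the sum of all entries outside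
column `0`. -/
def totalWait {n : ℕ} (W : Fin n → Fin (n + 2) → ℕ) : ℕ :=
  ∑ i, ∑ j : Fin (n + 1), W i j.succ

lemma arrivalTime_eq {n : ℕ} (W : Fin n → Fin (n + 2) → ℕ) (i : Fin n) :
    arrivalTime W i = W i 0 + (2 * n + 3) + ∑ j : Fin (n + 1), W i j.succ := by
  simp [arrivalTime, Finset.sum_filter, Fin.sum_univ_succ]

lemma total_wait_le {ε : ℝ} {n : ℕ} {W : Fin n → Fin (n + 2) → ℕ} (hε : 0 < ε)
    (hW : IsCandidate ε n W) : (totalWait W : ℝ) ≤ ε * (n : ℝ) ^ 2 := by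
  obtain ⟨h0, hF, hle⟩ := hW
  set B := ⌊(3 + ε) * (n : ℝ)⌋₊ with hB
  have hB' : (B : ℝ) ≤ (3 + ε) * n := Nat.floor_le (by positivity)
  have hFB : ∀ i, arrivalTime W i ≤ B := fun i => Nat.le_floor (hle i)
  have h1 := sum_range_le_of_injective _ h0
  -- The slacks `B - F_i` are distinct naturals as well.
  have h2 := sum_range_le_of_injective (fun i => B - arrivalTime W i) (by
    intro i j hij
    apply hF
    have := hFB i
    have := hFB j
    simp only at hij
    omega)
  have h3 : ∑ i, (B - arrivalTime W i) + ∑ i, arrivalTime W i = n * B := by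
    rw [← Finset.sum_add_distrib]
    simp [Nat.sub_add_cancel (hFB _)]
  have h4 : ∑ i, arrivalTime W i = ∑ i, W i 0 + n * (2 * n + 3) + totalWait W := by
    simp [arrivalTime_eq, totalWait, Finset.sum_add_distrib]
  have h5 := Finset.sum_range_id_mul_two n
  have h6 : totalWait W + n * (n - 1) + n * (2 * n + 3) ≤ n * B := by omega
  have h7 : totalWait W + n * n + n * (2 * n) ≤ n * B := by
    refine le_trans ?_ h6
    rcases n with _ | n
    · simp
    · simp only [Nat.add_sub_cancel]
      nlinarith
  have h8 : (totalWait W : ℝ) + n * n + n * (2 * n) ≤ n * B := by exact_mod_cast h7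
  nlinarith [mul_le_mul_of_nonneg_left hB' (Nat.cast_nonneg (α := ℝ) n)]

lemma sum_weight_le {n K : ℕ} {x : ℝ} (hx0 : 0 ≤ x) (hx1 : x < 1) :
    ∑ W ∈ Fintype.piFinset fun _ : Fin n => Fintype.piFinset fun _ : Fin (n + 2) => Finset.range K,
      x ^ totalWait W ≤ ((K : ℝ) * (1 - x)⁻¹ ^ (n + 1)) ^ n := by
  have hrow : ∑ w ∈ Fintype.piFinset fun _ : Fin (n + 2) => Finset.range K,
      x ^ (∑ j : Fin (n + 1), w j.succ) ≤ (K : ℝ) * (1 - x)⁻¹ ^ (n + 1) := by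
    have h := Finset.prod_univ_sum (fun _ : Fin (n + 2) => Finset.range K)
      (fun j a => if j = 0 then (1 : ℝ) else x ^ a)
    have h' : ∀ w : Fin (n + 2) → ℕ, (∏ j, if j = 0 then (1 : ℝ) else x ^ w j)
        = x ^ (∑ j : Fin (n + 1), w j.succ) := by
      intro w
      simp [Fin.prod_univ_succ, Finset.prod_pow_eq_pow_sum, Fin.succ_ne_zero]
    simp only [h'] at h
    rw [← h, Fin.prod_univ_succ]
    simp only [Fin.succ_ne_zero, if_true, if_false, Finset.prod_const, Finset.sum_const,
      Finset.card_range, Finset.card_univ, Fintype.card_fin, nsmul_eq_mul, mul_one]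
    have hg : ∑ a ∈ Finset.range K, x ^ a ≤ (1 - x)⁻¹ := by
      rw [← tsum_geometric_of_lt_one hx0 hx1]
      exact (summable_geometric_of_lt_one hx0 hx1).sum_le_tsum _ fun _ _ => by positivity
    gcongr
  have h := Finset.prod_univ_sum
    (fun _ : Fin n => Fintype.piFinset fun _ : Fin (n + 2) => Finset.range K)
    (fun _ w => x ^ (∑ j : Fin (n + 1), w j.succ))
  simp only [Finset.prod_pow_eq_pow_sum] at h
  simp only [totalWait]
  rw [← h]
  simp only [Finset.prod_const, Finset.card_univ, Fintype.card_fin]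
  gcongr

lemma candidate_mem_box {ε : ℝ} {n : ℕ} {W : Fin n → Fin (n + 2) → ℕ}
    (hW : IsCandidate ε n W) :
    W ∈ Fintype.piFinset fun _ : Fin n => Fintype.piFinset fun _ : Fin (n + 2) =>
      Finset.range (⌊(3 + ε) * (n : ℝ)⌋₊ + 1) := by
  simp only [Fintype.mem_piFinset, Finset.mem_range]
  intro i j
  have h1 : arrivalTime W i ≤ ⌊(3 + ε) * (n : ℝ)⌋₊ := Nat.le_floor (hW.2.2 i)
  rw [arrivalTime_eq] at h1
  refine Fin.cases ?_ (fun j => ?_) j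
  · omega
  · have := Finset.single_le_sum (f := fun j : Fin (n + 1) => W i j.succ)
      (fun _ _ => Nat.zero_le _) (Finset.mem_univ j)
    omega

lemma two_rpow_Phi {ε : ℝ} (hε : 0 < ε) :
    (2 : ℝ) ^ Phi ε = (ε / (1 + ε)) ^ (-ε) * (1 + ε) := by
  have h1 : (0 : ℝ) < 1 + ε := by linarith
  have h2 : 1 - ε / (1 + ε) = 1 / (1 + ε) := by field_simp; ring
  have h3 : Phi ε = Real.logb 2 (ε / (1 + ε)) * (-ε) + Real.logb 2 (1 + ε) := by
    rw [Phi, binEntropy, h2, one_div_one_div, one_div (ε / (1 + ε)), Real.logb_inv]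
    field_simp
  rw [h3, Real.rpow_add two_pos, Real.rpow_mul two_pos.le,
    Real.rpow_logb two_pos (by norm_num) (by positivity),
    Real.rpow_logb two_pos (by norm_num) h1]

lemma eventually_poly_le (ε δ : ℝ) (hε : 0 < ε) (hδ : 0 < δ) :
    ∀ᶠ n : ℕ in Filter.atTop,
      ((⌊(3 + ε) * (n : ℝ)⌋₊ + 1 : ℕ) : ℝ) * (1 + ε) ≤ (2 : ℝ) ^ (δ * n) := by
  have hr0 : (0 : ℝ) < 2 ^ (-δ) := by positivity
  have hr : (2 : ℝ) ^ (-δ) < 1 := Real.rpow_lt_one_of_one_lt_of_neg one_lt_two (by linarith)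
  have ht := tendsto_pow_const_mul_const_pow_of_abs_lt_one 1 (r := (2 : ℝ) ^ (-δ))
    (by rwa [abs_of_pos hr0])
  have hc : (0 : ℝ) < ((4 + ε) * (1 + ε))⁻¹ := by positivity
  filter_upwards [ht.eventually_lt_const hc, Filter.eventually_ge_atTop 1] with n hn hn1
  have hn1' : (1 : ℝ) ≤ n := by exact_mod_cast hn1
  have hfl : (⌊(3 + ε) * (n : ℝ)⌋₊ : ℝ) ≤ (3 + ε) * n := Nat.floor_le (by positivity)
  have hpow : ((2 : ℝ) ^ (-δ)) ^ n = ((2 : ℝ) ^ (δ * n))⁻¹ := by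
    rw [← Real.rpow_natCast, ← Real.rpow_mul two_pos.le, ← Real.rpow_neg two_pos.le]
    ring_nf
  have hP : (0 : ℝ) < (2 : ℝ) ^ (δ * n) := by positivity
  rw [hpow, pow_one, ← div_eq_mul_inv, div_lt_iff₀ hP, inv_mul_eq_div,
    lt_div_iff₀ (by positivity)] at hn
  push_cast
  calc ((⌊(3 + ε) * (n : ℝ)⌋₊ : ℝ) + 1) * (1 + ε) ≤ ((4 + ε) * n) * (1 + ε) := by
        gcongr
        linarith
    _ ≤ _ := by linarith

/-- For all `ε > 0` and `δ > 0` there is `n₀` such that for all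
`n ≥ n₀` the number of candidate routing matrices for parameters `ε`, `n` is at
most `2^{(Φ(ε)+δ)·n²}`. -/
theorem count_candidate_matrices (ε : ℝ) (hε : 0 < ε) (δ : ℝ) (hδ : 0 < δ) :
    ∃ n₀ : ℕ, ∀ n : ℕ, n₀ ≤ n →
      {W : Fin n → Fin (n + 2) → ℕ | IsCandidate ε n W}.Finite ∧
      (Nat.card {W : Fin n → Fin (n + 2) → ℕ // IsCandidate ε n W} : ℝ)
        ≤ (2 : ℝ) ^ ((Phi ε + δ) * (n : ℝ) ^ 2) := by
  obtain ⟨n₀, hn₀⟩ := Filter.eventually_atTop.1 (eventually_poly_le ε δ hε hδ)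
  refine ⟨n₀, fun n hn => ?_⟩
  have hpoly := hn₀ n hn
  set K := ⌊(3 + ε) * (n : ℝ)⌋₊ + 1 with hK
  set box := Fintype.piFinset fun _ : Fin n => Fintype.piFinset fun _ : Fin (n + 2) =>
    Finset.range K with hbox
  have hsub : {W : Fin n → Fin (n + 2) → ℕ | IsCandidate ε n W} ⊆ (box : Set _) :=
    fun W hW => candidate_mem_box hW
  refine ⟨box.finite_toSet.subset hsub, ?_⟩
  classical
  set S := box.filter (IsCandidate ε n) with hS
  have hcard : Nat.card {W : Fin n → Fin (n + 2) → ℕ // IsCandidate ε n W} = S.card := by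
    exact Nat.subtype_card S fun W =>
      ⟨fun h => (Finset.mem_filter.1 h).2, fun h => Finset.mem_filter.2 ⟨hsub h, h⟩⟩
  rw [hcard]
  set x := ε / (1 + ε) with hx
  have h1ε : (0 : ℝ) < 1 + ε := by linarith
  have hx0 : 0 < x := by positivity
  have hx1 : x < 1 := by rw [hx, div_lt_one h1ε]; linarith
  have hinv : (1 - x)⁻¹ = 1 + ε := by
    rw [hx]
    field_simp
    ring
  have hweight : (S.card : ℝ) * x ^ (ε * (n : ℝ) ^ 2) ≤ ((K : ℝ) * (1 + ε) ^ (n + 1)) ^ n := by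
    rw [← hinv]
    refine le_trans ?_ (sum_weight_le hx0.le hx1)
    rw [← nsmul_eq_mul, ← Finset.sum_const]
    refine le_trans (Finset.sum_le_sum fun W hW => ?_)
      (Finset.sum_le_sum_of_subset_of_nonneg (Finset.filter_subset _ _)
        fun _ _ _ => by positivity)
    rw [← Real.rpow_natCast x (totalWait W)]
    exact Real.rpow_le_rpow_of_exponent_ge hx0 hx1.le
      (total_wait_le hε (Finset.mem_filter.1 hW).2)
  have hexp : (2 : ℝ) ^ (Phi ε * (n : ℝ) ^ 2)
      = (x ^ (ε * (n : ℝ) ^ 2))⁻¹ * ((1 + ε) ^ n) ^ n := by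
    rw [Real.rpow_mul two_pos.le, two_rpow_Phi hε, Real.mul_rpow (by positivity) h1ε.le,
      ← Real.rpow_mul hx0.le, ← Real.rpow_neg hx0.le, neg_mul, ← pow_mul,
      ← Real.rpow_natCast (1 + ε) (n * n), Nat.cast_mul, ← pow_two (n : ℝ)]
  have hexpδ : (2 : ℝ) ^ (δ * (n : ℝ) ^ 2) = ((2 : ℝ) ^ (δ * n)) ^ n := by
    rw [← Real.rpow_natCast _ n, ← Real.rpow_mul two_pos.le]
    ring_nf
  have hX : 0 < x ^ (ε * (n : ℝ) ^ 2) := by positivity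
  rw [add_mul, Real.rpow_add two_pos, hexp, hexpδ]
  calc (S.card : ℝ) ≤ (x ^ (ε * (n : ℝ) ^ 2))⁻¹ * ((K : ℝ) * (1 + ε) ^ (n + 1)) ^ n := by
        rw [inv_mul_eq_div, le_div_iff₀ hX]
        exact hweight
    _ = (x ^ (ε * (n : ℝ) ^ 2))⁻¹ * ((1 + ε) ^ n) ^ n * (K * (1 + ε)) ^ n := by
        rw [mul_assoc, ← mul_pow]
        ring_nf
    _ ≤ _ := by gcongr
end

section
/- Let n be a positive integer divisible by 16 and set m := n/4. Let A₁, …, A_m be subsets of {1,…,n} with |A_i| ≥ n − n/16 for every i, and let X₁, …, X_m be independent random variables with X_i uniformly distributed on A_i. Then the probability that X₁, …, X_m are pairwise distinct is at most (15/16)^{n/8}. -/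
/-!
Reveal the values `x 0, x 1, …` one at a time. Once `i ≥ n/8` distinct values have been used, at
most `n/16` of them lie outside `A i`, so at least `n/16 ≥ |A i|/16` elements of `A i` are
forbidden for `x i`, and at most `(15/16)|A i|` choices remain. Each of the last
`n/4 - n/8 = n/8` indices thus contributes a factor `15/16`. The step is
`card_extensions_le`, and the induction on the number of indices is `card_injective_choices_le`.
-/

/-- The injective choice functions of the family `A`, as a finset. -/
def injectiveChoices {n m : ℕ} (A : Fin m → Finset (Fin n)) : Finset (Fin m → Fin n) :=
  Finset.univ.filter fun x => (∀ i, x i ∈ A i) ∧ Function.Injective x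

/-- A tuple `b` of the first `m` values extends to an injective choice in at most
`|A (last m) \ range b|` ways. -/
lemma card_extensions_le {n m : ℕ} (A : Fin (m + 1) → Finset (Fin n)) (b : Fin m → Fin n) :
    ((injectiveChoices A).filter fun x => Fin.init x = b).card ≤
      (A (Fin.last m) \ Finset.univ.image b).card := by
  refine Finset.card_le_card_of_injOn (fun x => x (Fin.last m)) ?_ ?_
  · intro x hx
    simp only [injectiveChoices, Finset.coe_filter, Finset.mem_filter, Finset.mem_univ, true_and,
      Set.mem_ofPred_eq] at hx
    obtain ⟨⟨hmem, hinj⟩, rfl⟩ := hx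
    simp only [Finset.coe_sdiff, Set.mem_sdiff, Finset.mem_coe, Finset.mem_image, Finset.mem_univ,
      true_and, not_exists]
    exact ⟨hmem _, fun j hj => (Fin.castSucc_lt_last j).ne (hinj hj)⟩
  · intro x hx y hy hxy
    simp only [Finset.coe_filter, Set.mem_ofPred_eq] at hx hy
    rw [← Fin.snoc_init_self x, ← Fin.snoc_init_self y, hx.2, hy.2]
    exact congrArg _ hxy

/-- The truncated exponent `m - n / 8` counts the indices `i` with `n / 8 ≤ i < m`. -/
lemma card_injective_choices_le {n : ℕ} (h16 : 16 ∣ n) (m : ℕ) (A : Fin m → Finset (Fin n))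
    (hA : ∀ i, n - n / 16 ≤ (A i).card) :
    ((injectiveChoices A).card : ℝ) ≤ (15 / 16 : ℝ) ^ (m - n / 8) * ∏ i, ((A i).card : ℝ) := by
  induction m with
  | zero =>
    have h : (injectiveChoices A).card ≤ 1 := (Finset.card_le_univ _).trans (by simp)
    simpa using h
  | succ m ih =>
    have ih' := ih (fun i => A i.castSucc) fun i => hA _
    set a := (A (Fin.last m)).card with ha
    have han : a ≤ n := (Finset.card_le_univ _).trans (by simp)
    have hla : n - n / 16 ≤ a := hA _
    have hmaps : ∀ x ∈ injectiveChoices A,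
        Fin.init x ∈ injectiveChoices (fun i : Fin m => A i.castSucc) := by
      intro x hx
      simp only [injectiveChoices, Finset.mem_filter, Finset.mem_univ, true_and] at hx ⊢
      exact ⟨fun i => hx.1 _, hx.2.comp (Fin.castSucc_injective m)⟩
    have hfiber : ∀ b ∈ injectiveChoices (fun i : Fin m => A i.castSucc),
        ((injectiveChoices A).filter fun x => Fin.init x = b).card ≤
          if n / 8 ≤ m then a - n / 16 else a := by
      intro b hb
      simp only [injectiveChoices, Finset.mem_filter, Finset.mem_univ, true_and] at hb
      refine (card_extensions_le A b).trans ?_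
      split_ifs with hm
      · have himg : (Finset.univ.image b).card = m := by
          rw [Finset.card_image_of_injective _ hb.2]; simp
        -- `|A \ S| + |S| = |A ∪ S| ≤ n`, so `|A \ S| ≤ n - m ≤ n - n / 8 ≤ a - n / 16`.
        have h1 := Finset.card_sdiff_add_card (A (Fin.last m)) (Finset.univ.image b)
        have h2 : (A (Fin.last m) ∪ Finset.univ.image b).card ≤ n :=
          (Finset.card_le_univ _).trans (by simp)
        omega
      · exact Finset.card_le_card Finset.sdiff_subset
    have hcard := Finset.card_le_mul_card_image_of_maps_to hmaps _ hfiber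
    have hcard' : ((injectiveChoices A).card : ℝ) ≤
        ((if n / 8 ≤ m then a - n / 16 else a : ℕ) : ℝ) *
          ((injectiveChoices fun i : Fin m => A i.castSucc).card : ℝ) := by
      exact_mod_cast hcard
    rw [Fin.prod_univ_castSucc, ← ha]
    set P := ∏ i : Fin m, ((A i.castSucc).card : ℝ)
    split_ifs at hcard' with hm
    · have hk : ((a - n / 16 : ℕ) : ℝ) ≤ 15 / 16 * a := by
        have h : 16 * (a - n / 16) ≤ 15 * a := by omega
        have h' : (16 : ℝ) * ((a - n / 16 : ℕ) : ℝ) ≤ 15 * a := by exact_mod_cast h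
        linarith
      rw [Nat.succ_sub hm, pow_succ]
      calc _ ≤ _ := hcard'
        _ ≤ (15 / 16 * a) * ((15 / 16 : ℝ) ^ (m - n / 8) * P) := by gcongr
        _ = _ := by ring
    · rw [show m + 1 - n / 8 = m - n / 8 by omega]
      calc _ ≤ _ := hcard'
        _ ≤ (a : ℝ) * ((15 / 16 : ℝ) ^ (m - n / 8) * P) := by gcongr
        _ = _ := by ring


/-- Let `16 ∣ n`, `n > 0`, `m = n/4`, and let `A 0, …, A (m-1)` be
subsets of `{1,…,n}` with `|A i| ≥ n − n/16`. If the `X i` are independent with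
`X i` uniform on `A i` (so that probabilities are counted over the product of the
`A i`), then the probability that the `X i` are pairwise distinct is at most
`(15/16)^(n/8)`. -/
theorem collision_probability_bound (n : ℕ) (hn : 0 < n) (h16 : 16 ∣ n)
    (A : Fin (n / 4) → Finset (Fin n))
    (hA : ∀ i, n - n / 16 ≤ (A i).card) :
    (Nat.card {x : Fin (n / 4) → Fin n //
        (∀ i, x i ∈ A i) ∧ Function.Injective x} : ℝ)
      ≤ (15 / 16 : ℝ) ^ (n / 8) * ∏ i, ((A i).card : ℝ) := by
  have h := card_injective_choices_le h16 (n / 4) A hA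
  rw [show n / 4 - n / 8 = n / 8 by omega] at h
  rwa [Nat.card_eq_fintype_card, Fintype.card_subtype]
end
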